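/- Let 𝒞 be a cut-partition of a finite connected simple graph G. Then the following are equivalent: (i) between every pair of vertices of G there is a shortest path using at most one edge of each cut C ∈ 𝒞; (ii) every shortest path in G uses at most one edge of each cut C ∈ 𝒞; (iii) for every nonempty vertex set V' ⊆ V(G), the convex hull conv(V') equals the intersection ∩_{C∈𝒞} C(V'); (iv) for all vertices v, w, conv({v,w}) = ∩_{C∈𝒞} C({v,w}). -/

import Mathlib

/-- A set of vertices is (geodesically) convex. -/
def GConvex {V : Type*} (G : SimpleGraph V) (S : Set V) : Prop :=
  ∀ u ∈ S, ∀ w ∈ S, ∀ x : V, G.dist u x + G.dist x w = G.dist u w → x ∈ S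

/-- The convex hull of a set of vertices: the smallest convex set containing it. -/
def GConvexHull {V : Type*} (G : SimpleGraph V) (S : Set V) : Set V :=
  ⋂₀ {T : Set V | GConvex G T ∧ S ⊆ T}

/-- A cut of a connected simple graph: an inclusion-minimal set of edges whose
removal disconnects the graph. -/
def IsCut {V : Type*} (G : SimpleGraph V) (C : Set (Sym2 V)) : Prop :=
  C ⊆ G.edgeSet ∧ ¬ (G.deleteEdges C).Connected ∧
    ∀ C' : Set (Sym2 V), C' ⊂ C → (G.deleteEdges C').Connected

/-- A cut-partition: a set of cuts partitioning the edge set. -/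
def IsCutPartition {V : Type*} (G : SimpleGraph V) (𝒞 : Set (Set (Sym2 V))) : Prop :=
  (∀ C ∈ 𝒞, IsCut G C) ∧ 𝒞.PairwiseDisjoint id ∧ ⋃₀ 𝒞 = G.edgeSet

open Classical in
/-- The number of edges of a walk (with multiplicity) belonging to a given edge set. -/
noncomputable def cutUse {V : Type*} (G : SimpleGraph V) {u w : V} (p : G.Walk u w)
    (C : Set (Sym2 V)) : ℕ :=
  p.edges.countP fun e => decide (e ∈ C)

/-- A cut separates a vertex set `V'` if `V'` meets both sides of the cut. -/
def CutSeparates {V : Type*} (G : SimpleGraph V) (C : Set (Sym2 V)) (V' : Set V) : Prop :=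
  ∃ a ∈ V', ∃ b ∈ V', ¬ (G.deleteEdges C).Reachable a b

open Classical in
/-- `C(V')`: the whole vertex set if `C` separates `V'`, and the side of `C`
containing `V'` otherwise. -/
noncomputable def cutRegion {V : Type*} (G : SimpleGraph V) (C : Set (Sym2 V))
    (V' : Set V) : Set V :=
  if CutSeparates G C V' then Set.univ
  else {x : V | ∃ a ∈ V', (G.deleteEdges C).Reachable x a}

section Cuts

variable {V : Type*} {G : SimpleGraph V} {C : Set (Sym2 V)}

/-- A cut consists of all edges leaving any component of its complement. -/
theorem IsCut.not_reachable_iff_reachable (hC : IsCut G C) (u : V) {a b : V}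
    (hab : s(a, b) ∈ C) :
    ¬ ((G.deleteEdges C).Reachable u a ↔ (G.deleteEdges C).Reachable u b) := by
  intro hiff
  obtain ⟨-, hdisc, hmin⟩ := hC
  have hconn := hmin (C \ {s(a, b)}) ⟨Set.sdiff_subset, fun h => (h hab).2 rfl⟩
  have hmem : ∀ v : V, (G.deleteEdges C).Reachable u v := by
    intro v
    obtain ⟨p⟩ := hconn.preconnected v u
    induction p with
    | nil => exact SimpleGraph.Reachable.refl _
    | @cons x y z hxy p ih =>
      specialize ih hiff
      rw [SimpleGraph.deleteEdges_adj] at hxy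
      by_cases hxC : s(x, y) ∈ C
      · have hxe : s(x, y) = s(a, b) := by
          by_contra hne
          exact hxy.2 ⟨hxC, hne⟩
        rcases Sym2.eq_iff.1 hxe with ⟨rfl, rfl⟩ | ⟨rfl, rfl⟩
        · exact hiff.2 ih
        · exact hiff.1 ih
      · exact ih.trans (SimpleGraph.Adj.reachable
          (SimpleGraph.deleteEdges_adj.2 ⟨hxy.1, hxC⟩)).symm
  have : Nonempty V := ⟨u⟩
  exact hdisc ⟨fun v w => (hmem v).symm.trans (hmem w)⟩

theorem IsCut.not_reachable (hC : IsCut G C) {a b : V} (hab : s(a, b) ∈ C) :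
    ¬ (G.deleteEdges C).Reachable a b := fun h =>
  hC.not_reachable_iff_reachable a hab ⟨fun _ => h, fun _ => SimpleGraph.Reachable.refl _⟩

/-- Removing a cut leaves at most two components. -/
theorem IsCut.reachable_of_not_reachable (hG : G.Connected) (hC : IsCut G C) {u v w : V}
    (huv : ¬ (G.deleteEdges C).Reachable u v) (huw : ¬ (G.deleteEdges C).Reachable u w) :
    (G.deleteEdges C).Reachable v w := by
  have hne : C.Nonempty := by
    rw [Set.nonempty_iff_ne_empty]
    rintro rfl
    exact hC.2.1 (by simpa using hG)
  obtain ⟨e, he⟩ := hne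
  induction e with
  | h a b =>
    by_contra hvw
    have h₁ := hC.not_reachable_iff_reachable u he
    have h₂ := hC.not_reachable_iff_reachable v he
    have h₃ := hC.not_reachable_iff_reachable w he
    have h₄ : ∀ {x y z : V}, (G.deleteEdges C).Reachable x z →
      (G.deleteEdges C).Reachable y z → (G.deleteEdges C).Reachable x y :=
      fun h h' => h.trans h'.symm
    have hua := @h₄ u v a
    have hub := @h₄ u v b
    have hua' := @h₄ u w a
    have hub' := @h₄ u w b
    have hva := @h₄ v w a
    have hvb := @h₄ v w b
    grind

open Classical in
theorem cutUse_cons {u v w : V} (h : G.Adj u v) (p : G.Walk v w) :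
    cutUse G (.cons h p) C = cutUse G p C + if s(u, v) ∈ C then 1 else 0 := by
  simp [cutUse, List.countP_cons]

theorem cutUse_append {u v w : V} (p : G.Walk u v) (q : G.Walk v w) :
    cutUse G (p.append q) C = cutUse G p C + cutUse G q C := by
  simp [cutUse, SimpleGraph.Walk.edges_append]

/-- A walk crosses a cut an even number of times iff its ends are on the same side. -/
theorem IsCut.even_cutUse_iff (hG : G.Connected) (hC : IsCut G C) {u w : V} (p : G.Walk u w) :
    Even (cutUse G p C) ↔ (G.deleteEdges C).Reachable u w := by
  induction p with
  | nil => simp [cutUse]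
  | @cons u v w h p ih =>
    rw [cutUse_cons]
    split_ifs with huv
    · have hn := hC.not_reachable huv
      rw [Nat.even_add_one, ih]
      refine ⟨fun hvw => ?_, fun huw hvw => hn (huw.trans hvw.symm)⟩
      exact hC.reachable_of_not_reachable hG (fun h => hn h.symm) hvw
    · have hr : (G.deleteEdges C).Reachable u v :=
        (SimpleGraph.deleteEdges_adj.2 ⟨h, huv⟩ : (G.deleteEdges C).Adj u v).reachable
      rw [add_zero, ih]
      exact ⟨hr.trans, hr.symm.trans⟩

theorem IsCut.cutUse_mod_two_eq (hG : G.Connected) (hC : IsCut G C) {u w : V}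
    (p q : G.Walk u w) : cutUse G p C % 2 = cutUse G q C % 2 := by
  have h := (hC.even_cutUse_iff hG p).trans (hC.even_cutUse_iff hG q).symm
  rw [Nat.even_iff, Nat.even_iff] at h
  lia

theorem mem_cutRegion_iff {V' : Set V} {x : V} :
    x ∈ cutRegion G C V' ↔
      (¬ CutSeparates G C V' → ∃ a ∈ V', (G.deleteEdges C).Reachable x a) := by
  unfold cutRegion
  split_ifs with h <;> simp [h]

theorem subset_cutRegion (V' : Set V) : V' ⊆ cutRegion G C V' := fun x hx =>
  mem_cutRegion_iff.2 fun _ => ⟨x, hx, SimpleGraph.Reachable.refl _⟩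

theorem exists_geodesic_through (hG : G.Connected) {u x w : V}
    (hx : G.dist u x + G.dist x w = G.dist u w) :
    ∃ (p : G.Walk u x) (q : G.Walk x w), (p.append q).length = G.dist u w := by
  obtain ⟨p, hp⟩ := hG.exists_walk_length_eq_dist u x
  obtain ⟨q, hq⟩ := hG.exists_walk_length_eq_dist x w
  exact ⟨p, q, by rw [SimpleGraph.Walk.length_append, hp, hq, hx]⟩

theorem dist_add_dist_of_cons_geodesic (hG : G.Connected) {u v w : V} (h : G.Adj u v)
    (p : G.Walk v w) (hp : (SimpleGraph.Walk.cons h p).length = G.dist u w) :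
    p.length = G.dist v w ∧ G.dist u v + G.dist v w = G.dist u w := by
  have h₁ := SimpleGraph.dist_le p
  have h₂ := hG.dist_triangle (u := u) (v := v) (w := w)
  have h₃ : G.dist u v = 1 := SimpleGraph.dist_eq_one_iff_adj.2 h
  rw [SimpleGraph.Walk.length_cons] at hp
  lia

end Cuts

section CutPartitions

variable {V : Type*} {G : SimpleGraph V} {𝒞 : Set (Set (Sym2 V))}

open Classical in
/-- The edges of a walk are distributed among the cuts of a cut-partition. -/
theorem IsCutPartition.length_eq_sum_cutUse [Fintype V] (h𝒞 : IsCutPartition G 𝒞) {u w : V}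
    (p : G.Walk u w) : p.length = ∑ C ∈ 𝒞.toFinset, cutUse G p C := by
  induction p with
  | nil => simp [cutUse]
  | @cons u v w h p ih =>
    obtain ⟨C, hC, huv⟩ : s(u, v) ∈ ⋃₀ 𝒞 := by rw [h𝒞.2.2]; exact h
    have hone : ∑ D ∈ 𝒞.toFinset, (if s(u, v) ∈ D then 1 else 0) = 1 := by
      rw [Finset.sum_eq_single C]
      · simp [huv]
      · intro D hD hne
        rw [Set.mem_toFinset] at hD
        exact if_neg fun huv' => Set.disjoint_left.1 (h𝒞.2.1 hD hC hne) huv' huv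
      · intro hn
        exact absurd (Set.mem_toFinset.2 hC) hn
    simp only [cutUse_cons, Finset.sum_add_distrib, hone, ← ih, SimpleGraph.Walk.length_cons]

theorem IsCutPartition.cutUse_le_of_le_one (hG : G.Connected) (h𝒞 : IsCutPartition G 𝒞)
    {u w : V} {p : G.Walk u w} (hp : ∀ C ∈ 𝒞, cutUse G p C ≤ 1) (q : G.Walk u w)
    {C : Set (Sym2 V)} (hC : C ∈ 𝒞) : cutUse G p C ≤ cutUse G q C := by
  have h₁ := (h𝒞.1 C hC).cutUse_mod_two_eq hG p q
  have h₂ := hp C hC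
  lia

/-- A walk using each cut at most once is a shortest path. -/
theorem IsCutPartition.length_eq_dist [Fintype V] (hG : G.Connected) (h𝒞 : IsCutPartition G 𝒞)
    {u w : V} {p : G.Walk u w} (hp : ∀ C ∈ 𝒞, cutUse G p C ≤ 1) :
    p.length = G.dist u w := by
  classical
  obtain ⟨q, hq⟩ := hG.exists_walk_length_eq_dist u w
  refine le_antisymm ?_ (SimpleGraph.dist_le p)
  rw [← hq, h𝒞.length_eq_sum_cutUse, h𝒞.length_eq_sum_cutUse]
  exact Finset.sum_le_sum fun C hC => h𝒞.cutUse_le_of_le_one hG hp q (Set.mem_toFinset.1 hC)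

/-- If some shortest path uses each cut at most once, so do all with the same ends. -/
theorem IsCutPartition.cutUse_le_one [Fintype V] (hG : G.Connected) (h𝒞 : IsCutPartition G 𝒞)
    {u w : V} {p q : G.Walk u w} (hp : ∀ C ∈ 𝒞, cutUse G p C ≤ 1)
    (hq : q.length = G.dist u w) {C : Set (Sym2 V)} (hC : C ∈ 𝒞) : cutUse G q C ≤ 1 := by
  classical
  by_contra! hlt
  have hsum : ∑ D ∈ 𝒞.toFinset, cutUse G p D < ∑ D ∈ 𝒞.toFinset, cutUse G q D :=
    Finset.sum_lt_sum
      (fun D hD => h𝒞.cutUse_le_of_le_one hG hp q (Set.mem_toFinset.1 hD))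
      ⟨C, Set.mem_toFinset.2 hC, (hp C hC).trans_lt hlt⟩
  rw [← h𝒞.length_eq_sum_cutUse, ← h𝒞.length_eq_sum_cutUse, hq,
    h𝒞.length_eq_dist hG hp] at hsum
  exact hsum.false

/-- Sides of cuts are convex if shortest paths use each cut at most once. -/
theorem IsCut.reachable_of_between {C : Set (Sym2 V)} (hG : G.Connected) (hC : IsCut G C)
    (hgeo : ∀ (u w : V) (p : G.Walk u w), p.length = G.dist u w → cutUse G p C ≤ 1)
    {u w x : V} (huw : (G.deleteEdges C).Reachable u w)
    (hx : G.dist u x + G.dist x w = G.dist u w) : (G.deleteEdges C).Reachable u x := by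
  obtain ⟨p, q, hpq⟩ := exists_geodesic_through hG hx
  have hle := hgeo u w _ hpq
  have heven := (hC.even_cutUse_iff hG (p.append q)).2 huw
  rw [← hC.even_cutUse_iff hG p]
  rw [Nat.even_iff] at *
  rw [cutUse_append] at *
  lia

/-- Shortest paths use a cut at most once if its sides are convex. -/
theorem IsCut.cutUse_le_one_of_between {C : Set (Sym2 V)} (hG : G.Connected) (hC : IsCut G C)
    (hconv : ∀ u w x : V, (G.deleteEdges C).Reachable u w →
      G.dist u x + G.dist x w = G.dist u w → (G.deleteEdges C).Reachable u x)
    {u w : V} (p : G.Walk u w) (hp : p.length = G.dist u w) : cutUse G p C ≤ 1 := by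
  induction p with
  | nil => simp [cutUse]
  | @cons u v w h p ih =>
    obtain ⟨hlen, hdist⟩ := dist_add_dist_of_cons_geodesic hG h p hp
    specialize ih hlen
    by_contra! hlt
    rw [cutUse_cons] at hlt
    split_ifs at hlt with huv
    · refine hC.not_reachable huv (hconv u w v ?_ hdist)
      rw [← hC.even_cutUse_iff hG (.cons h p), cutUse_cons, if_pos huv, Nat.even_iff]
      lia
    · lia

theorem IsCut.gConvex_cutRegion {C : Set (Sym2 V)} (hG : G.Connected) (hC : IsCut G C)
    (hgeo : ∀ (u w : V) (p : G.Walk u w), p.length = G.dist u w → cutUse G p C ≤ 1)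
    (V' : Set V) : GConvex G (cutRegion G C V') := by
  intro u hu w hw x hx
  rw [mem_cutRegion_iff] at *
  intro hsep
  obtain ⟨a, ha, hua⟩ := hu hsep
  obtain ⟨b, hb, hwb⟩ := hw hsep
  have hab : (G.deleteEdges C).Reachable a b := by
    by_contra h
    exact hsep ⟨a, ha, b, hb, h⟩
  have hux := hC.reachable_of_between hG hgeo ((hua.trans hab).trans hwb.symm) hx
  exact ⟨a, ha, hux.symm.trans hua⟩

/-- A convex set containing `V'` contains the intersection of the regions of `V'`. -/
theorem IsCutPartition.iInter_cutRegion_subset [Fintype V] (hG : G.Connected)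
    (h𝒞 : IsCutPartition G 𝒞)
    (hgeo : ∀ (u w : V) (p : G.Walk u w), p.length = G.dist u w → ∀ C ∈ 𝒞, cutUse G p C ≤ 1)
    {V' T : Set V} (hV' : V'.Nonempty) (hT : GConvex G T) (hsub : V' ⊆ T) :
    ⋂ C ∈ 𝒞, cutRegion G C V' ⊆ T := by
  intro x hx
  obtain ⟨y, hyT, hmin⟩ := Set.exists_min_image T (G.dist · x) T.toFinite (hV'.mono hsub)
  obtain ⟨p, hp⟩ := hG.exists_walk_length_eq_dist y x
  cases p with
  | nil => exact hyT
  | @cons _ z _ hyz p =>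
    exfalso
    obtain ⟨hlen, hdist⟩ := dist_add_dist_of_cons_geodesic hG hyz p hp
    have hyz₁ : G.dist y z = 1 := SimpleGraph.dist_eq_one_iff_adj.2 hyz
    have hzT : z ∉ T := fun hz => by
      have := hmin z hz
      lia
    obtain ⟨C, hC, hyzC⟩ : s(y, z) ∈ ⋃₀ 𝒞 := by rw [h𝒞.2.2]; exact hyz
    have hcut := h𝒞.1 C hC
    have hzx : (G.deleteEdges C).Reachable z x := by
      have hle := hgeo _ _ _ hp C hC
      rw [cutUse_cons, if_pos hyzC] at hle
      rw [← hcut.even_cutUse_iff hG p, Nat.even_iff]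
      lia
    obtain ⟨a, ha, hza⟩ : ∃ a ∈ V', (G.deleteEdges C).Reachable z a := by
      by_cases hsep : CutSeparates G C V'
      · obtain ⟨a, ha, b, hb, hab⟩ := hsep
        by_cases hza : (G.deleteEdges C).Reachable z a
        · exact ⟨a, ha, hza⟩
        · refine ⟨b, hb, ?_⟩
          exact hcut.reachable_of_not_reachable hG (fun h => hza h.symm) hab
      · obtain ⟨a, ha, hxa⟩ := mem_cutRegion_iff.1 (Set.mem_iInter₂.1 hx C hC) hsep
        exact ⟨a, ha, hzx.trans hxa⟩
    obtain ⟨q, hq⟩ := hG.exists_walk_length_eq_dist z a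
    have huse : ∀ D ∈ 𝒞, cutUse G (.cons hyz q) D ≤ 1 := by
      intro D hD
      have hle := hgeo _ _ q hq D hD
      rw [cutUse_cons]
      split_ifs with hyzD
      · have hDC : D = C := by
          by_contra hne
          exact Set.disjoint_left.1 (h𝒞.2.1 hD hC hne) hyzD hyzC
        subst hDC
        have heven := (hcut.even_cutUse_iff hG q).2 hza
        rw [Nat.even_iff] at heven
        lia
      · exact hle
    exact hzT (hT y hyT a (hsub ha) z
      (dist_add_dist_of_cons_geodesic hG hyz q (h𝒞.length_eq_dist hG huse)).2)

theorem IsCutPartition.gConvexHull_eq [Fintype V] (hG : G.Connected) (h𝒞 : IsCutPartition G 𝒞)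
    (hgeo : ∀ (u w : V) (p : G.Walk u w), p.length = G.dist u w → ∀ C ∈ 𝒞, cutUse G p C ≤ 1)
    {V' : Set V} (hV' : V'.Nonempty) : GConvexHull G V' = ⋂ C ∈ 𝒞, cutRegion G C V' := by
  refine Set.Subset.antisymm (Set.subset_iInter₂ fun C hC => Set.sInter_subset_of_mem ?_)
    (Set.subset_sInter fun T hT => h𝒞.iInter_cutRegion_subset hG hgeo hV' hT.1 hT.2)
  exact ⟨(h𝒞.1 C hC).gConvex_cutRegion hG (fun u w p hp => hgeo u w p hp C hC) V',
    subset_cutRegion V'⟩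

theorem IsCutPartition.cutUse_le_one_of_gConvexHull_pair (hG : G.Connected)
    (h𝒞 : IsCutPartition G 𝒞)
    (hpair : ∀ v w : V, GConvexHull G {v, w} = ⋂ C ∈ 𝒞, cutRegion G C {v, w})
    {u w : V} (p : G.Walk u w) (hp : p.length = G.dist u w) {C : Set (Sym2 V)} (hC : C ∈ 𝒞) :
    cutUse G p C ≤ 1 := by
  refine (h𝒞.1 C hC).cutUse_le_one_of_between hG (fun u w x huw hx => ?_) p hp
  have hmem : x ∈ GConvexHull G {u, w} := by
    rintro T ⟨hT, hsub⟩
    exact hT u (hsub (by simp)) w (hsub (by simp)) x hx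
  rw [hpair u w] at hmem
  have hsep : ¬ CutSeparates G C {u, w} := by
    rintro ⟨a, rfl | rfl, b, rfl | rfl, hab⟩
    exacts [hab (.refl _), hab huw, hab huw.symm, hab (.refl _)]
  obtain ⟨a, rfl | rfl, hxa⟩ := mem_cutRegion_iff.1 (Set.mem_iInter₂.1 hmem C hC) hsep
  exacts [hxa.symm, huw.trans hxa.symm]

end CutPartitions

/-- The four equivalent conditions on a cut-partition of a finite connected graph. -/
theorem cutPartition_conditions_equiv {V : Type*} [Fintype V] (G : SimpleGraph V)
    (hconn : G.Connected) (𝒞 : Set (Set (Sym2 V))) (hpart : IsCutPartition G 𝒞) :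
    ((∀ u w : V, ∃ p : G.Walk u w, p.length = G.dist u w ∧ ∀ C ∈ 𝒞, cutUse G p C ≤ 1) ↔
      (∀ (u w : V) (p : G.Walk u w), p.length = G.dist u w → ∀ C ∈ 𝒞, cutUse G p C ≤ 1)) ∧
    ((∀ (u w : V) (p : G.Walk u w), p.length = G.dist u w → ∀ C ∈ 𝒞, cutUse G p C ≤ 1) ↔
      (∀ V' : Set V, V'.Nonempty → GConvexHull G V' = ⋂ C ∈ 𝒞, cutRegion G C V')) ∧
    ((∀ V' : Set V, V'.Nonempty → GConvexHull G V' = ⋂ C ∈ 𝒞, cutRegion G C V') ↔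
      (∀ v w : V, GConvexHull G {v, w} = ⋂ C ∈ 𝒞, cutRegion G C {v, w})) := by
  have hpair_geo := fun hpair u w p hp C hC =>
    hpart.cutUse_le_one_of_gConvexHull_pair hconn hpair (u := u) (w := w) p hp (C := C) hC
  refine ⟨⟨fun h u w q hq C hC => ?_, fun h u w => ?_⟩,
    ⟨fun h V' hV' => hpart.gConvexHull_eq hconn h hV', fun h => ?_⟩,
    ⟨fun h v w => h _ (Set.insert_nonempty _ _), fun h V' hV' => ?_⟩⟩
  · obtain ⟨p, -, hp⟩ := h u w
    exact hpart.cutUse_le_one hconn hp hq hC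
  · obtain ⟨p, hp⟩ := hconn.exists_walk_length_eq_dist u w
    exact ⟨p, hp, h u w p hp⟩
  · exact hpair_geo fun v w => h _ (Set.insert_nonempty _ _)
  · exact hpart.gConvexHull_eq hconn (hpair_geo h) hV'
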